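/- Let p ≥ 3 be an integer, h = ⌊p/2⌋, and let g be an element of BS(1,p). Then there exist integers m ≥ 0, s ≥ 0, k ≥ −m and integers i_{−m}, i_{−m+1}, …, i_k with |i_l| ≤ h for all −m ≤ l ≤ k−1 and |i_k| ≤ h+1, such that one of the following holds: (1) 0 ≤ s ≤ m, 0 < m, (1 ≤ |i_k| or (k = −m and s = 0)), g = t^{k} a^{i_k} t^{−1} a^{i_{k−1}} t^{−1} ⋯ t^{−1} a^{i_{−m}} t^{s}, and l(g) = |k| + k + m + s + Σ_{l=−m}^{k} |i_l|; or (2) 0 ≤ m ≤ s, (1 ≤ |i_k| or k = −m = 0), g = t^{−m} a^{i_{−m}} t a^{i_{−m+1}} t ⋯ t a^{i_k} t^{s−m−k}, and l(g) = m + (k+m) + |s − m − k| + Σ_{l=−m}^{k} |i_l|. Moreover, in each case g = t^{−m} a^{j} t^{s} where j = Σ_{l=−m}^{k} i_l p^{l+m}. -/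

import Mathlib

/-- The single relator `t a t⁻¹ a^{-p}` of the Baumslag–Solitar group `BS(1,p)`,
where `a` is the image of `0 : Fin 2` and `t` is the image of `1 : Fin 2`. -/
def BSRel (p : ℤ) : Set (FreeGroup (Fin 2)) :=
  {FreeGroup.of 1 * FreeGroup.of 0 * (FreeGroup.of 1)⁻¹ * (FreeGroup.of 0) ^ (-p)}

/-- The Baumslag–Solitar group `BS(1,p) = ⟨a, t ∣ t a t⁻¹ = a^p⟩`. -/
abbrev BS (p : ℤ) : Type := PresentedGroup (BSRel p)

/-- The generator `a` of `BS(1,p)`. -/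
def BSa (p : ℤ) : BS p := PresentedGroup.of 0

/-- The generator `t` of `BS(1,p)`. -/
def BSt (p : ℤ) : BS p := PresentedGroup.of 1

/-- The word length of `g ∈ BS(1,p)` with respect to the generating set
`{a, a⁻¹, t, t⁻¹}`: the least `n` such that `g` is a product of `n` generators. -/
noncomputable def BSlength (p : ℤ) (g : BS p) : ℕ :=
  sInf {n : ℕ | ∃ w : List (BS p), w.length = n ∧
    (∀ x ∈ w, x = BSa p ∨ x = (BSa p)⁻¹ ∨ x = BSt p ∨ x = (BSt p)⁻¹) ∧ w.prod = g}

section HorocyclicRelation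

variable {G : Type*} [Group G] {a t : G} {p : ℤ}

/-- `g` is a product of exactly `n` elements of `{a, a⁻¹, t, t⁻¹}`. -/
def HasWord (a t : G) (n : ℕ) (g : G) : Prop :=
  ∃ w : List G, w.length = n ∧ (∀ x ∈ w, x = a ∨ x = a⁻¹ ∨ x = t ∨ x = t⁻¹) ∧ w.prod = g

theorem HasWord.one (a t : G) : HasWord a t 0 1 := ⟨[], by simp⟩

theorem HasWord.letter {x : G} (hx : x = a ∨ x = a⁻¹ ∨ x = t ∨ x = t⁻¹) : HasWord a t 1 x :=
  ⟨[x], by simpa using hx⟩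

theorem HasWord.mul {m n : ℕ} {g h : G} (hg : HasWord a t m g) (hh : HasWord a t n h) :
    HasWord a t (m + n) (g * h) := by
  obtain ⟨v, rfl, hv, rfl⟩ := hg
  obtain ⟨w, rfl, hw, rfl⟩ := hh
  refine ⟨v ++ w, by simp, fun x hx => ?_, by simp⟩
  rcases List.mem_append.1 hx with hx | hx
  exacts [hv x hx, hw x hx]

theorem HasWord.pow {x : G} (hx : HasWord a t 1 x) (n : ℕ) : HasWord a t n (x ^ n) := by
  induction n with
  | zero => simpa using HasWord.one a t
  | succ n ih => rw [pow_succ]; exact ih.mul hx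

theorem HasWord.zpow_left (a t : G) (z : ℤ) : HasWord a t z.natAbs (a ^ z) := by
  obtain ⟨n, rfl | rfl⟩ := z.eq_nat_or_neg
  · simpa using (HasWord.letter (a := a) (t := t) (x := a) (by simp)).pow n
  · simpa using (HasWord.letter (a := a) (t := t) (x := a⁻¹) (by simp)).pow n

theorem HasWord.zpow_right (a t : G) (z : ℤ) : HasWord a t z.natAbs (t ^ z) := by
  obtain ⟨n, rfl | rfl⟩ := z.eq_nat_or_neg
  · simpa using (HasWord.letter (a := a) (t := t) (x := t) (by simp)).pow n
  · simpa using (HasWord.letter (a := a) (t := t) (x := t⁻¹) (by simp)).pow n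

theorem pow_mul_zpow_of_conj (h : t * a * t⁻¹ = a ^ p) (n : ℕ) (c : ℤ) :
    t ^ n * a ^ c = a ^ (c * p ^ n) * t ^ n := by
  induction n with
  | zero => simp
  | succ n ih =>
    have h1 : t * a ^ (c * p ^ n) = a ^ (c * p ^ n * p) * t := by
      rw [mul_comm _ p, zpow_mul a p, ← h, conj_zpow]
      group
    calc t ^ (n + 1) * a ^ c = t * (t ^ n * a ^ c) := by rw [pow_succ', mul_assoc]
      _ = a ^ (c * p ^ n * p) * t * t ^ n := by rw [ih, ← mul_assoc, h1]
      _ = a ^ (c * p ^ (n + 1)) * t ^ (n + 1) := by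
        rw [pow_succ, pow_succ', ← mul_assoc c, ← mul_assoc]

theorem inv_pow_succ_mul_zpow (h : t * a * t⁻¹ = a ^ p) (m : ℕ) (c : ℤ) :
    (t ^ (m + 1))⁻¹ * a ^ (c * p) = (t ^ m)⁻¹ * a ^ c * t⁻¹ := by
  have h1 := pow_mul_zpow_of_conj h 1 c
  simp only [pow_one] at h1
  rw [eq_mul_inv_iff_mul_eq, mul_assoc, ← h1, pow_succ']
  group

/-- The ascending product `a^{f 0} t a^{f 1} t ⋯ a^{f (n-1)} t`. -/
theorem prod_ascending (h : t * a * t⁻¹ = a ^ p) (f : ℕ → ℤ) (n : ℕ) :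
    (List.ofFn fun u : Fin n => a ^ f u * t).prod =
      a ^ (∑ u ∈ Finset.range n, f u * p ^ u) * t ^ n := by
  induction n with
  | zero => simp
  | succ n ih =>
    rw [List.ofFn_succ', List.concat_eq_append, List.prod_append]
    simp only [Fin.val_castSucc, Fin.val_last, List.prod_singleton]
    rw [ih, Finset.sum_range_succ, zpow_add, pow_succ, mul_assoc, ← mul_assoc (t ^ n),
      pow_mul_zpow_of_conj h]
    simp only [mul_assoc]

theorem HasWord.prod_ascending (a t : G) (f : ℕ → ℤ) (n : ℕ) :
    HasWord a t (n + ∑ u ∈ Finset.range (n + 1), (f u).natAbs)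
      ((List.ofFn fun u : Fin (n + 1) => a ^ f u * t).prod * t⁻¹) := by
  induction n with
  | zero => simpa using HasWord.zpow_left a t (f 0)
  | succ n ih =>
    have h1 := (ih.mul (HasWord.letter (x := t) (by simp))).mul
      (HasWord.zpow_left a t (f (n + 1)))
    rw [List.ofFn_succ', List.concat_eq_append, List.prod_append, Finset.sum_range_succ]
    simp only [Fin.val_castSucc, Fin.val_last, List.prod_singleton]
    convert h1 using 1
    · ring
    · group

/-- The descending product `a^{f (n-1)} t⁻¹ ⋯ a^{f 1} t⁻¹ a^{f 0} t⁻¹`. -/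
theorem prod_descending (h : t * a * t⁻¹ = a ^ p) (f : ℕ → ℤ) (n : ℕ) :
    t ^ n * (List.ofFn fun u : Fin n => a ^ f (n - 1 - u) * t⁻¹).prod =
      t * a ^ (∑ u ∈ Finset.range n, f u * p ^ u) * t⁻¹ := by
  induction n with
  | zero => simp
  | succ n ih =>
    have h1 : ∀ i : Fin n, n - ((i.succ : Fin (n + 1)) : ℕ) = n - 1 - i := by
      intro i; simp only [Fin.val_succ]; omega
    rw [List.ofFn_succ, List.prod_cons]
    simp only [Nat.add_sub_cancel, h1, Fin.val_zero, Nat.sub_zero]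
    rw [Finset.sum_range_succ, add_comm (∑ u ∈ _, _), zpow_add]
    have h2 := pow_mul_zpow_of_conj h n (f n)
    calc _ = t * (t ^ n * a ^ f n) * t⁻¹ *
          (List.ofFn fun u : Fin n => a ^ f (n - 1 - u) * t⁻¹).prod := by
            rw [pow_succ']; group
      _ = t * a ^ (f n * p ^ n) * t⁻¹ *
          (t ^ n * (List.ofFn fun u : Fin n => a ^ f (n - 1 - u) * t⁻¹).prod) := by
            rw [h2]; group
      _ = _ := by rw [ih]; group

theorem HasWord.prod_descending (a t : G) (f : ℕ → ℤ) (n : ℕ) :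
    HasWord a t (n + ∑ u ∈ Finset.range (n + 1), (f u).natAbs)
      ((List.ofFn fun u : Fin (n + 1) => a ^ f (n - u) * t⁻¹).prod * t) := by
  induction n with
  | zero => simpa using HasWord.zpow_left a t (f 0)
  | succ n ih =>
    have h1 := ((HasWord.zpow_left a t (f (n + 1))).mul
      (HasWord.letter (x := t⁻¹) (by simp))).mul ih
    have h2 : ∀ i : Fin (n + 1), n + 1 - ((i.succ : Fin (n + 1 + 1)) : ℕ) = n - i := by
      intro i; simp only [Fin.val_succ]; omega
    rw [List.ofFn_succ, List.prod_cons, Finset.sum_range_succ]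
    simp only [h2, Fin.val_zero, Nat.sub_zero]
    convert h1 using 1
    · ring
    · group

/-- A word of length `n` representing `g` visits heights between `-m` and `N - m`, and deposits
`f u` copies of `a` at height `u - m`. -/
theorem exists_digits_of_word (h : t * a * t⁻¹ = a ^ p) (w : List G)
    (hw : ∀ x ∈ w, x = a ∨ x = a⁻¹ ∨ x = t ∨ x = t⁻¹) :
    ∃ (m s N : ℕ) (f : ℕ → ℤ), m ≤ N ∧ s ≤ N ∧
      w.prod = (t ^ m)⁻¹ * a ^ (∑ u ∈ Finset.range (N + 1), f u * p ^ u) * t ^ s ∧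
      2 * (N : ℤ) - |(s : ℤ) - m| + ∑ u ∈ Finset.range (N + 1), |f u| ≤ w.length := by
  induction w using List.reverseRecOn with
  | nil => exact ⟨0, 0, 0, 0, by simp⟩
  | append_singleton w x ih =>
    obtain ⟨m, s, N, f, hm, hs, hg, hl⟩ := ih fun y hy => hw y (by simp [hy])
    clear ih
    have deposit (c : ℤ) (hc : |c| = 1) (hx : x = a ^ c) :
        ∃ (m s N : ℕ) (f : ℕ → ℤ), m ≤ N ∧ s ≤ N ∧
          (w ++ [x]).prod =
            (t ^ m)⁻¹ * a ^ (∑ u ∈ Finset.range (N + 1), f u * p ^ u) * t ^ s ∧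
          2 * (N : ℤ) - |(s : ℤ) - m| + ∑ u ∈ Finset.range (N + 1), |f u| ≤
            (w ++ [x]).length := by
      have hmem : s ∈ Finset.range (N + 1) := by simp; omega
      refine ⟨m, s, N, f + Pi.single s c, hm, hs, ?_, ?_⟩
      · have : ∑ u ∈ Finset.range (N + 1), (f + (Pi.single s c : ℕ → ℤ)) u * p ^ u =
            ∑ u ∈ Finset.range (N + 1), f u * p ^ u + c * p ^ s := by
          simp only [Pi.add_apply, add_mul, Finset.sum_add_distrib]
          congr 1
          rw [Finset.sum_eq_single_of_mem s hmem]
          · simp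
          · intro b _ hb; simp [hb]
        rw [this, List.prod_append, List.prod_singleton, hg, hx, mul_assoc,
          pow_mul_zpow_of_conj h, zpow_add]
        simp only [mul_assoc]
      · have : ∑ u ∈ Finset.range (N + 1), |(f + (Pi.single s c : ℕ → ℤ)) u| ≤
            ∑ u ∈ Finset.range (N + 1), |f u| + 1 := by
          calc _ ≤ ∑ u ∈ Finset.range (N + 1), (|f u| + |(Pi.single s c : ℕ → ℤ) u|) :=
                Finset.sum_le_sum fun u _ => abs_add_le _ _
            _ = _ := by
              rw [Finset.sum_add_distrib]
              congr 1
              rw [Finset.sum_eq_single_of_mem s hmem]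
              · simpa using hc
              · intro b _ hb; simp [hb]
        simp only [List.length_append, List.length_singleton]
        push_cast
        linarith
    rcases hw x (by simp) with rfl | rfl | rfl | rfl
    · exact deposit 1 (by simp) (by simp)
    · exact deposit (-1) (by simp) (by simp)
    · have hprod : (w ++ [x]).prod =
          (x ^ m)⁻¹ * a ^ (∑ u ∈ Finset.range (N + 1), f u * p ^ u) * x ^ (s + 1) := by
        rw [List.prod_append, List.prod_singleton, hg, pow_succ]
        simp only [mul_assoc]
      rcases hs.lt_or_eq with hs | rfl
      · refine ⟨m, s + 1, N, f, hm, hs, hprod, ?_⟩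
        simp only [List.length_append, List.length_singleton]
        push_cast
        generalize ∑ u ∈ Finset.range (N + 1), |f u| = S at *
        grind
      · refine ⟨m, s + 1, s + 1, Function.update f (s + 1) 0, by omega, le_rfl, ?_, ?_⟩
        · rw [hprod, Finset.sum_range_succ _ (s + 1)]
          congr 3
          simp only [Function.update_self, zero_mul, add_zero]
          refine Finset.sum_congr rfl fun u hu => ?_
          rw [Function.update_of_ne (by simp at hu; omega)]
        · have : ∑ u ∈ Finset.range (s + 1 + 1), |Function.update f (s + 1) 0 u| =
              ∑ u ∈ Finset.range (s + 1), |f u| := by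
            rw [Finset.sum_range_succ _ (s + 1)]
            simp only [Function.update_self, abs_zero, add_zero]
            refine Finset.sum_congr rfl fun u hu => ?_
            rw [Function.update_of_ne (by simp at hu; omega)]
          rw [this]
          simp only [List.length_append, List.length_singleton]
          push_cast
          generalize ∑ u ∈ Finset.range (s + 1), |f u| = S at *
          grind
    · cases s with
      | succ s =>
        refine ⟨m, s, N, f, hm, by omega, ?_, ?_⟩
        · rw [List.prod_append, List.prod_singleton, hg, pow_succ]
          group
        · simp only [List.length_append, List.length_singleton]
          push_cast at *
          generalize ∑ u ∈ Finset.range (N + 1), |f u| = S at *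
          grind
      | zero =>
        refine ⟨m + 1, 0, N + 1, fun u => u.casesOn 0 f, by omega, by omega, ?_, ?_⟩
        · have hsum : ∑ u ∈ Finset.range (N + 1 + 1), (u.casesOn 0 f : ℤ) * p ^ u =
              (∑ u ∈ Finset.range (N + 1), f u * p ^ u) * p := by
            rw [Finset.sum_range_succ', Finset.sum_mul]
            simp [pow_succ, mul_assoc]
          rw [List.prod_append, List.prod_singleton, hg, hsum, inv_pow_succ_mul_zpow h]
          simp
        · have hsum : ∑ u ∈ Finset.range (N + 1 + 1), |(u.casesOn 0 f : ℤ)| =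
              ∑ u ∈ Finset.range (N + 1), |f u| := by
            rw [Finset.sum_range_succ']
            simp
          rw [hsum]
          simp only [List.length_append, List.length_singleton]
          clear deposit hg hw
          push_cast at *
          generalize ∑ u ∈ Finset.range (N + 1), |f u| = S at *
          grind

end HorocyclicRelation

section Digits

variable {p : ℤ}

/-- Division with remainder of absolute value at most `p / 2` does not increase the total
number of `a`'s, and it saves two of them if the dividend exceeds `p / 2 + 1`. -/
theorem exists_carry (hp : 3 ≤ p) (n : ℤ) :
    ∃ r c : ℤ, n = r + c * p ∧ |r| ≤ p / 2 ∧ |r| + |c| ≤ |n| ∧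
      (p / 2 + 1 < |n| → |r| + |c| + 2 ≤ |n|) := by
  wlog hn : 0 ≤ n generalizing n
  · obtain ⟨r, c, h1, h2, h3, h4⟩ := this (-n) (by omega)
    exact ⟨-r, -c, by linarith, by simpa using h2, by simpa using h3, by simpa using h4⟩
  have hdm := Int.emod_add_mul_ediv n p
  have hr0 := Int.emod_nonneg n (show p ≠ 0 by omega)
  have hrp := Int.emod_lt_of_pos n (show 0 < p by omega)
  have hq0 : 0 ≤ n / p := Int.ediv_nonneg hn (by omega)
  generalize n % p = r at *
  generalize n / p = q at *
  have hq : 3 * q ≤ p * q := by nlinarith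
  rcases le_or_gt r (p / 2) with hr | hr
  · refine ⟨r, q, by linarith, by rwa [abs_of_nonneg hr0], ?_, ?_⟩ <;>
      rw [abs_of_nonneg hr0, abs_of_nonneg hq0, abs_of_nonneg hn]
    · omega
    · intro h
      rcases hq0.eq_or_lt with rfl | hq1
      · simp at hdm; omega
      · omega
  · have hneg : r - p ≤ 0 := by omega
    refine ⟨r - p, q + 1, by linarith, by rw [abs_of_nonpos hneg]; omega, ?_, ?_⟩ <;>
      rw [abs_of_nonpos hneg, abs_of_nonneg (by omega : 0 ≤ q + 1), abs_of_nonneg hn]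
    · omega
    · intro h
      rcases hq0.eq_or_lt with rfl | hq1
      · simp at hdm; omega
      · omega

theorem sum_range_update_self (F : ℕ → ℤ → ℤ) (f : ℕ → ℤ) (n : ℕ) (x : ℤ) :
    ∑ u ∈ Finset.range (n + 1), F u (Function.update f n x u) =
      ∑ u ∈ Finset.range n, F u (f u) + F n x := by
  rw [Finset.sum_range_succ, Function.update_self]
  congr 1
  refine Finset.sum_congr rfl fun u hu => ?_
  rw [Function.update_of_ne (by simp at hu; omega)]

theorem abs_update_le {f : ℕ → ℤ} {n : ℕ} {r b : ℤ} (hf : ∀ u < n, |f u| ≤ b) (hr : |r| ≤ b) :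
    ∀ u < n + 1, |Function.update f n r u| ≤ b := by
  intro u hu
  rcases eq_or_ne u n with rfl | hne
  · simpa using hr
  · rw [Function.update_of_ne hne]
    exact hf u (by omega)

/-- Carrying from the bottom up, with final carry `T`. -/
theorem exists_reduced_digits (hp : 3 ≤ p) (f : ℕ → ℤ) (n : ℕ) :
    ∃ (f' : ℕ → ℤ) (T : ℤ), (∀ u < n, |f' u| ≤ p / 2) ∧
      ∑ u ∈ Finset.range n, f' u * p ^ u + T * p ^ n = ∑ u ∈ Finset.range n, f u * p ^ u ∧
      ∑ u ∈ Finset.range n, |f' u| + |T| ≤ ∑ u ∈ Finset.range n, |f u| := by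
  induction n with
  | zero => exact ⟨0, 0, by simp⟩
  | succ n ih =>
    obtain ⟨f', T, hb, hv, hc⟩ := ih
    obtain ⟨r, c, h1, h2, h3, -⟩ := exists_carry hp (T + f n)
    refine ⟨Function.update f' n r, c, abs_update_le hb h2, ?_, ?_⟩
    · rw [sum_range_update_self (fun u y => y * p ^ u), Finset.sum_range_succ, ← hv, pow_succ]
      linear_combination -(p ^ n) * h1
    · rw [sum_range_update_self (fun _ y => |y|), Finset.sum_range_succ]
      linarith [abs_add_le T (f n)]

/-- A large top digit can be spread over additional positions, each of which costs two. -/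
theorem exists_spread_top_digit (hp : 3 ≤ p) (T : ℤ) (n : ℕ) (f : ℕ → ℤ)
    (hf : ∀ u < n, |f u| ≤ p / 2) :
    ∃ (n' : ℕ) (f' : ℕ → ℤ), n ≤ n' ∧ (∀ u < n', |f' u| ≤ p / 2) ∧ |f' n'| ≤ p / 2 + 1 ∧
      ∑ u ∈ Finset.range (n' + 1), f' u * p ^ u =
        ∑ u ∈ Finset.range n, f u * p ^ u + T * p ^ n ∧
      2 * (n' : ℤ) + ∑ u ∈ Finset.range (n' + 1), |f' u| ≤
        2 * n + ∑ u ∈ Finset.range n, |f u| + |T| := by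
  induction hk : T.natAbs using Nat.strong_induction_on generalizing T n f with
  | _ k ih =>
    rcases le_or_gt |T| (p / 2 + 1) with hT | hT
    · refine ⟨n, Function.update f n T, le_rfl, fun u hu => ?_, by simpa using hT,
        sum_range_update_self (fun u y => y * p ^ u) f n T, ?_⟩
      · rw [Function.update_of_ne hu.ne]
        exact hf u hu
      · rw [sum_range_update_self (fun _ y => |y|)]
        linarith
    · obtain ⟨r, c, h1, h2, -, h4⟩ := exists_carry hp T
      have h4 := h4 hT
      have hr := abs_nonneg r
      obtain ⟨n', f', h5, h6, h7, h8, h9⟩ := ih c.natAbs (by rw [← hk]; zify; omega) c (n + 1)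
        (Function.update f n r) (abs_update_le hf h2) rfl
      refine ⟨n', f', by omega, h6, h7, ?_, ?_⟩
      · rw [h8, sum_range_update_self (fun u y => y * p ^ u), pow_succ]
        linear_combination -(p ^ n) * h1
      · rw [sum_range_update_self (fun _ y => |y|)] at h9
        push_cast at h9
        linarith

theorem exists_balanced_digits (hp : 3 ≤ p) (n : ℕ) (f : ℕ → ℤ) :
    ∃ (n' : ℕ) (f' : ℕ → ℤ), n ≤ n' ∧ (∀ u < n', |f' u| ≤ p / 2) ∧ |f' n'| ≤ p / 2 + 1 ∧
      ∑ u ∈ Finset.range (n' + 1), f' u * p ^ u = ∑ u ∈ Finset.range (n + 1), f u * p ^ u ∧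
      2 * (n' : ℤ) + ∑ u ∈ Finset.range (n' + 1), |f' u| ≤
        2 * n + ∑ u ∈ Finset.range (n + 1), |f u| := by
  obtain ⟨f₁, T, hb, hv, hc⟩ := exists_reduced_digits hp f n
  obtain ⟨n', f', h1, h2, h3, h4, h5⟩ := exists_spread_top_digit hp (T + f n) n f₁ hb
  refine ⟨n', f', h1, h2, h3, ?_, ?_⟩
  · rw [h4, Finset.sum_range_succ, ← hv]
    ring
  · rw [Finset.sum_range_succ _ n]
    linarith [abs_add_le T (f n)]

/-- Leading zeros can be dropped, unless all digits vanish. -/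
theorem exists_leading_digit (f : ℕ → ℤ) (n : ℕ) (hf : ∃ u ≤ n, f u ≠ 0) :
    ∃ k ≤ n, f k ≠ 0 ∧ ∀ F : ℕ → ℤ → ℤ, (∀ u, F u 0 = 0) →
      ∑ u ∈ Finset.range (n + 1), F u (f u) = ∑ u ∈ Finset.range (k + 1), F u (f u) := by
  induction n with
  | zero =>
    obtain ⟨u, hu, h⟩ := hf
    obtain rfl : u = 0 := by omega
    exact ⟨0, le_rfl, h, fun _ _ => rfl⟩
  | succ n ih =>
    by_cases h0 : f (n + 1) = 0
    · obtain ⟨u, hu, h⟩ := hf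
      have hne : u ≠ n + 1 := by rintro rfl; exact h h0
      obtain ⟨k, hk, h1, h2⟩ := ih ⟨u, by omega, h⟩
      refine ⟨k, by omega, h1, fun F hF => ?_⟩
      rw [Finset.sum_range_succ, h0, hF, add_zero, h2 F hF]
    · exact ⟨n + 1, le_rfl, h0, fun _ _ => rfl⟩

end Digits

section BaumslagSolitar

theorem BSt_conj (p : ℤ) : BSt p * BSa p * (BSt p)⁻¹ = BSa p ^ p := by
  have h := PresentedGroup.one_of_mem (rels := BSRel p) (Set.mem_singleton _)
  rw [← mul_inv_eq_one, ← zpow_neg]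
  exact h

theorem exists_hasWord (p : ℤ) (g : BS p) : ∃ n, HasWord (BSa p) (BSt p) n g := by
  induction g using PresentedGroup.induction_on with
  | _ z =>
    induction z using FreeGroup.induction_on with
    | C1 => exact ⟨0, HasWord.one _ _⟩
    | of x =>
      refine ⟨1, HasWord.letter ?_⟩
      fin_cases x
      exacts [Or.inl rfl, Or.inr (Or.inr (Or.inl rfl))]
    | inv_of x _ =>
      refine ⟨1, HasWord.letter ?_⟩
      fin_cases x
      exacts [Or.inr (Or.inl rfl), Or.inr (Or.inr (Or.inr rfl))]
    | mul x y hx hy =>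
      obtain ⟨m, hm⟩ := hx
      obtain ⟨n, hn⟩ := hy
      exact ⟨m + n, hm.mul hn⟩

theorem hasWord_BSlength (p : ℤ) (g : BS p) : HasWord (BSa p) (BSt p) (BSlength p g) g :=
  Nat.sInf_mem (exists_hasWord p g)

theorem BSlength_eq_of_hasWord {p : ℤ} {g : BS p} {n : ℕ} {z : ℤ}
    (hw : HasWord (BSa p) (BSt p) n g) (hn : (n : ℤ) = z) (hz : z ≤ BSlength p g) :
    (BSlength p g : ℤ) = z := by
  have : BSlength p g ≤ n := Nat.sInf_le hw
  omega

/-- Every element has digits satisfying the bounds, realised by a path of minimal length. -/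
theorem exists_minimal_digits (p : ℤ) (hp : 3 ≤ p) (g : BS p) :
    ∃ (m s N : ℕ) (f : ℕ → ℤ), m ≤ N ∧ s ≤ N ∧
      (∀ u < N, |f u| ≤ p / 2) ∧ |f N| ≤ p / 2 + 1 ∧
      g = (BSt p ^ m)⁻¹ * BSa p ^ (∑ u ∈ Finset.range (N + 1), f u * p ^ u) * BSt p ^ s ∧
      2 * (N : ℤ) - |(s : ℤ) - m| + ∑ u ∈ Finset.range (N + 1), |f u| ≤ BSlength p g := by
  obtain ⟨w, hwl, hw, hwg⟩ := hasWord_BSlength p g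
  obtain ⟨m, s, N, f, hm, hs, hg, hl⟩ := exists_digits_of_word (BSt_conj p) w hw
  obtain ⟨N', f', h1, h2, h3, h4, h5⟩ := exists_balanced_digits hp N f
  refine ⟨m, s, N', f', by omega, by omega, h2, h3, ?_, ?_⟩
  · rw [h4, ← hg, hwg]
  · rw [← hwl]
    linarith

end BaumslagSolitar


/-- Every element `g` of `BS(1,p)` (for `p ≥ 3`, with `h = ⌊p/2⌋`) is represented by a
geodesic in one of two standard forms, and moreover `g = t^{-m} a^j t^s` with
`j = Σ_{l=-m}^{k} i_l p^{l+m}`.  In form (1) the geodesic is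
`t^k a^{i_k} t⁻¹ a^{i_{k-1}} t⁻¹ ⋯ t⁻¹ a^{i_{-m}} t^s` and its length is
`|k| + k + m + s + Σ |i_l|`; in form (2) the geodesic is
`t^{-m} a^{i_{-m}} t a^{i_{-m+1}} t ⋯ t a^{i_k} t^{s-m-k}` and its length is
`m + (k+m) + |s-m-k| + Σ |i_l|`. -/
theorem BS_geodesic_form (p : ℤ) (hp : 3 ≤ p) (g : BS p) :
    ∃ (m s : ℕ) (k : ℤ) (i : ℤ → ℤ),
      -(m : ℤ) ≤ k ∧
      (∀ l : ℤ, -(m : ℤ) ≤ l → l ≤ k - 1 → |i l| ≤ p / 2) ∧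
      |i k| ≤ p / 2 + 1 ∧
      g = (BSt p) ^ (-(m : ℤ)) *
            (BSa p) ^ (∑ u ∈ Finset.range (k + m + 1).toNat, i ((u : ℤ) - m) * p ^ u) *
            (BSt p) ^ (s : ℤ) ∧
      (((s : ℤ) ≤ (m : ℤ) ∧ 0 < m ∧ (1 ≤ |i k| ∨ (k = -(m : ℤ) ∧ s = 0)) ∧
          g = (BSt p) ^ k *
              (List.ofFn (fun u : Fin (k + m + 1).toNat =>
                (BSa p) ^ (i (k - (u : ℤ))) * (BSt p) ^ (-1 : ℤ))).prod *
              (BSt p) ^ ((s : ℤ) + 1) ∧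
          (BSlength p g : ℤ) = |k| + k + m + s +
              ∑ u ∈ Finset.range (k + m + 1).toNat, |i ((u : ℤ) - m)|)
        ∨
       ((m : ℤ) ≤ (s : ℤ) ∧ (1 ≤ |i k| ∨ (k = 0 ∧ m = 0)) ∧
          g = (BSt p) ^ (-(m : ℤ)) *
              (List.ofFn (fun u : Fin (k + m + 1).toNat =>
                (BSa p) ^ (i ((u : ℤ) - m)) * BSt p)).prod *
              (BSt p) ^ ((s : ℤ) - m - k - 1) ∧
          (BSlength p g : ℤ) = m + (k + m) + |(s : ℤ) - m - k| +
              ∑ u ∈ Finset.range (k + m + 1).toNat, |i ((u : ℤ) - m)|)) := by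
  obtain ⟨m, s, N, f, hm, hs, hb, hbN, hg, hl⟩ := exists_minimal_digits p hp g
  by_cases hf : ∃ u ≤ N, f u ≠ 0
  · obtain ⟨K, hK, hfK, hdrop⟩ := exists_leading_digit f N hf
    rw [hdrop (fun u y => y * p ^ u) (by simp)] at hg
    rw [hdrop (fun _ y => |y|) (by simp)] at hl
    have htop : |f K| ≤ p / 2 + 1 := by
      rcases hK.lt_or_eq with hK | rfl
      · have := hb K hK
        omega
      · exact hbN
    have hlen : ((K : ℤ) - m + m + 1).toNat = K + 1 := by omega
    have hpos : 1 ≤ |f K| := Int.one_le_abs hfK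
    have hcast : ((∑ u ∈ Finset.range (K + 1), (f u).natAbs : ℕ) : ℤ) =
        ∑ u ∈ Finset.range (K + 1), |f u| := by
      push_cast
      rfl
    have hg' : g = BSt p ^ (-(m : ℤ)) *
        BSa p ^ (∑ u ∈ Finset.range (K + 1), f u * p ^ u) * BSt p ^ (s : ℤ) := by
      rw [hg]
      simp
    refine ⟨m, s, K - m, fun l => f (l + m).toNat, by omega, fun l h1 h2 => hb _ (by omega),
      by simpa using htop, ?_, ?_⟩
    · rw [hlen]
      simpa using hg'
    by_cases hms : (s : ℤ) ≤ m ∧ 0 < m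
    · refine Or.inl ⟨hms.1, hms.2, Or.inl (by simpa using hpos), ?_⟩
      have hform : g = BSt p ^ ((K : ℤ) - m) *
          (List.ofFn fun u : Fin (K + 1) => BSa p ^ f (K - u) * (BSt p)⁻¹).prod *
          BSt p ^ ((s : ℤ) + 1) := by
        have h1 := prod_descending (BSt_conj p) f (K + 1)
        simp only [Nat.add_sub_cancel] at h1
        rw [← eq_inv_mul_iff_mul_eq] at h1
        rw [h1, hg', ← zpow_natCast]
        push_cast
        group
      have hdig : ∀ u : Fin (K + 1), ((K : ℤ) - m - ((u : ℕ) : ℤ) + m).toNat = K - u := by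
        intro u
        omega
      refine ⟨?_, ?_⟩
      · rw [hlen]
        simpa only [hdig, zpow_neg_one] using hform
      · have hw := ((HasWord.zpow_right (BSa p) (BSt p) (K - m)).mul
          (HasWord.prod_descending (BSa p) (BSt p) f K)).mul
          (HasWord.zpow_right (BSa p) (BSt p) s)
        rw [hlen]
        simp only [sub_add_cancel, Int.toNat_natCast]
        refine BSlength_eq_of_hasWord (n := _) (by
          convert hw using 1
          rw [hform, zpow_add_one, ← (Commute.self_zpow (BSt p) s).eq]
          simp only [mul_assoc]) ?_ ?_
        · rw [← hcast, Int.abs_eq_natAbs]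
          omega
        · have hms := hms.1
          generalize ∑ u ∈ Finset.range (K + 1), |f u| = S at *
          grind
    · have hms : m ≤ s := by omega
      refine Or.inr ⟨by exact_mod_cast hms, Or.inl (by simpa using hpos), ?_⟩
      have hform : g = BSt p ^ (-(m : ℤ)) *
          (List.ofFn fun u : Fin (K + 1) => BSa p ^ f u * BSt p).prod *
          BSt p ^ ((s : ℤ) - m - (K - m) - 1) := by
        rw [prod_ascending (BSt_conj p), hg', ← zpow_natCast (BSt p) (K + 1)]
        push_cast
        group
      refine ⟨?_, ?_⟩
      · rw [hlen]
        simpa using hform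
      · have hw := ((HasWord.zpow_right (BSa p) (BSt p) (-m)).mul
          (HasWord.prod_ascending (BSa p) (BSt p) f K)).mul
          (HasWord.zpow_right (BSa p) (BSt p) (s - m - (K - m)))
        rw [hlen]
        simp only [sub_add_cancel, Int.toNat_natCast]
        refine BSlength_eq_of_hasWord (n := _) (by
          convert hw using 1
          rw [hform]
          group) ?_ ?_
        · rw [← hcast, Int.abs_eq_natAbs]
          omega
        · generalize ∑ u ∈ Finset.range (K + 1), |f u| = S at *
          grind
  · push Not at hf
    have hzero : ∀ u ∈ Finset.range (N + 1), f u = 0 := fun u hu => hf u (by simp at hu; omega)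
    rw [Finset.sum_eq_zero (fun u hu => by rw [hzero u hu, zero_mul])] at hg
    rw [Finset.sum_eq_zero (fun u hu => by rw [hzero u hu, abs_zero])] at hl
    have hg' : g = BSt p ^ ((s : ℤ) - m) := by
      rw [hg, ← zpow_natCast, ← zpow_natCast]
      group
    have hlen : (BSlength p g : ℤ) = |(s : ℤ) - m| :=
      BSlength_eq_of_hasWord (hg' ▸ HasWord.zpow_right (BSa p) (BSt p) (s - m)) (by simp)
        (by grind)
    have hh : 0 ≤ p / 2 := by omega
    by_cases hms : m ≤ s
    · refine ⟨0, s - m, 0, 0, by simp, by simp [hh], by simp; omega, ?_,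
        Or.inr ⟨by simp, by simp, ?_, ?_⟩⟩
      · simp [hg', hms]
      · simp [hg', hms, mul_self_zpow]
      · simp [hlen, hms]
    · have hms : s < m := not_le.1 hms
      refine ⟨m - s, 0, -((m - s : ℕ) : ℤ), 0, le_rfl, by simp [hh], by simp; omega, ?_,
        Or.inl ⟨by simp, by omega, by simp, ?_, ?_⟩⟩
      · simp [hg', hms.le]
      · simp [hg', hms.le]
      · simp [hlen, hms.le]
        grind
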